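/- arXiv:math/0604339 — 3 statements merged into one kernel-verified Lean document; each statement's English description precedes it below -/
import Mathlib

section
/- Let χ : K^× → ℤ/2ℤ be a group homomorphism whose kernel equals the norm group N_{L|K}(L^×), and let n ≥ 1 be such that χ vanishes on U_{n+1} but does not vanish identically on U_n. If e₁/e₂ ∈ U_{2n+1} (i.e. e₁ ≡ e₂ mod 𝔭^{2n+1}) and χ(e₁) = 0, then the subgroup of (ℤ/2ℤ)² generated by the set Im equals {0} × ℤ/2ℤ. -/
/-- An additively written, normalized (i.e. surjective onto `ℤ`) discrete
valuation on a field `K`.  All axioms are imposed at nonzero arguments only,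
so the value of `v` at `0` is irrelevant.  For a finite extension `K` of
`ℚ_[p]`, the normalized valuation `v : K^× → ℤ` of the paper is such a
structure. -/
structure DValuation (K : Type*) [Field K] where
  /-- the valuation map -/
  v : K → ℤ
  v_mul : ∀ ⦃x y : K⦄, x ≠ 0 → y ≠ 0 → v (x * y) = v x + v y
  min_le_v_add : ∀ ⦃x y : K⦄, x ≠ 0 → y ≠ 0 → x + y ≠ 0 → min (v x) (v y) ≤ v (x + y)
  v_surj : ∀ m : ℤ, ∃ x : K, x ≠ 0 ∧ v x = m

namespace DValuation

variable {K : Type*} [Field K] (w : DValuation K)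

/-- `u ∈ U_m` : `u` is (a unit) congruent to `1` modulo `𝔭^m`; for `m ≥ 1`
this forces `v u = 0`, i.e. `u ∈ 𝔬^×`. -/
def IsUnit₁ (m : ℤ) (u : K) : Prop :=
  u = 1 ∨ m ≤ w.v (u - 1)

end DValuation


namespace DValuation

variable {K : Type*} [Field K] (w : DValuation K)

lemma v_one' : w.v 1 = 0 := by
  have h := w.v_mul (one_ne_zero (α := K)) one_ne_zero
  rw [one_mul] at h
  omega

lemma v_neg' {x : K} (hx : x ≠ 0) : w.v (-x) = w.v x := by
  have h1 : w.v (-1) = 0 := by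
    have h := w.v_mul (x := (-1 : K)) (y := -1) (by simp) (by simp)
    have h2 := w.v_one'
    rw [show (-1 : K) * -1 = 1 by ring] at h
    omega
  have h := w.v_mul (x := (-1 : K)) (y := x) (by simp) hx
  rw [show (-1 : K) * x = -x by ring] at h
  omega

lemma v_inv' {x : K} (hx : x ≠ 0) : w.v (x⁻¹) = - w.v x := by
  have h := w.v_mul hx (inv_ne_zero hx)
  rw [mul_inv_cancel₀ hx, w.v_one'] at h
  omega

lemma unit_of {u : K} (hu : w.IsUnit₁ 1 u) : u ≠ 0 ∧ w.v u = 0 := by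
  rcases hu with rfl | hu
  · exact ⟨one_ne_zero, w.v_one'⟩
  have h0 : u ≠ 0 := by
    rintro rfl
    rw [zero_sub, w.v_neg' one_ne_zero, w.v_one'] at hu
    omega
  refine ⟨h0, ?_⟩
  by_cases h1 : u = 1
  · rw [h1, w.v_one']
  have h2 : u - 1 ≠ 0 := sub_ne_zero.2 h1
  have a := w.min_le_v_add h2 one_ne_zero (by simpa using h0)
  have b := w.min_le_v_add (x := u) (y := -(u - 1)) h0 (neg_ne_zero.2 h2) (by simp)
  rw [w.v_neg' h2] at b
  rw [show u + -(u - 1) = 1 by ring] at b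
  rw [show u - 1 + 1 = u by ring] at a
  rw [w.v_one'] at a b
  omega

lemma chi_add (χ : K → ZMod 2)
    (hχ : ∀ ⦃x y : K⦄, x ≠ 0 → y ≠ 0 → χ (x * y) = χ x + χ y) (n : ℕ)
    (hvan : ∀ u : K, w.IsUnit₁ ((n : ℤ) + 1) u → χ u = 0)
    {a b : K} (ha : a ≠ 0) (hb : b ≠ 0) (hab : a + b ≠ 0)
    (h : w.v a + n + 1 ≤ w.v b) : χ (a + b) = χ a := by
  have e : a + b = a * ((a + b) / a) := by field_simp
  have h1 : χ ((a + b) / a) = 0 := by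
    apply hvan
    right
    have : (a + b) / a - 1 = b * a⁻¹ := by field_simp; ring
    rw [this, w.v_mul hb (inv_ne_zero ha), w.v_inv' ha]
    omega
  rw [e, hχ ha (div_ne_zero hab ha), h1, add_zero]

end DValuation

/-- Case (i) of Proposition 4:  `K` a finite extension of `ℚ₂` with normalized
valuation `v`, `L = K(√d)` a ramified quadratic extension, `χ : K^× → ℤ/2ℤ`
the homomorphism with kernel `N_{L|K}(L^×)`, factoring through `U₁/U_{n+1}`
but not through `U₁/U_n` (`n ≥ 1`), and `e₁, e₂` distinct `1`-units.
If `e₁/e₂ ∈ U_{2n+1}` and `χ(e₁) = 0`, the subgroup of `(ℤ/2ℤ)²` generated by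
the image set `Im` is `{0} × ℤ/2ℤ`. -/
theorem chatelet_descent_image_case_i
    (K : Type*) [Field K] [Algebra ℚ_[2] K] [FiniteDimensional ℚ_[2] K]
    (w : DValuation K)
    (hext : ∀ x : ℚ_[2], x ≠ 0 →
      w.v (algebraMap ℚ_[2] K x) = w.v (algebraMap ℚ_[2] K 2) * x.valuation)
    (L : Type*) [Field L] [Algebra K L] (hL2 : Module.finrank K L = 2)
    (d : K) (hd0 : d ≠ 0) (hd : ¬ IsSquare d)
    (hdL : ∃ δ : L, δ ^ 2 = algebraMap K L d)
    (wL : DValuation L)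
    (hram : ∀ x : K, x ≠ 0 → wL.v (algebraMap K L x) = 2 * w.v x)
    (χ : K → ZMod 2)
    (hχ : ∀ ⦃x y : K⦄, x ≠ 0 → y ≠ 0 → χ (x * y) = χ x + χ y)
    (hker : ∀ x : K, x ≠ 0 → (χ x = 0 ↔ ∃ y : L, y ≠ 0 ∧ Algebra.norm K y = x))
    (n : ℕ) (hn : 1 ≤ n)
    (hvan : ∀ u : K, w.IsUnit₁ ((n : ℤ) + 1) u → χ u = 0)
    (hnonvan : ∃ u : K, w.IsUnit₁ (n : ℤ) u ∧ χ u ≠ 0)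
    (e₁ e₂ : K) (he₁ : w.IsUnit₁ 1 e₁) (he₂ : w.IsUnit₁ 1 e₂) (hee : e₁ ≠ e₂)
    (hcong : w.IsUnit₁ (2 * (n : ℤ) + 1) (e₁ / e₂))
    (hχe₁ : χ e₁ = 0) :
    AddSubgroup.closure
        (({((0 : ZMod 2), (0 : ZMod 2)), (χ (e₁ * e₂), χ (-e₁)),
            (χ e₁, χ (e₁ * (e₁ - e₂))), (χ e₂, χ (e₂ - e₁))} : Set (ZMod 2 × ZMod 2)) ∪
          {p : ZMod 2 × ZMod 2 | ∃ x : K, x ≠ 0 ∧ x ≠ e₁ ∧ x ≠ e₂ ∧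
            χ (x * (x - e₁) * (x - e₂)) = 0 ∧ p = (χ x, χ (x - e₁))}) =
      AddSubgroup.prod (⊥ : AddSubgroup (ZMod 2)) (⊤ : AddSubgroup (ZMod 2)) := by
  have z2 : ∀ a : ZMod 2, a + a = 0 := by decide
  have z1 : ∀ a : ZMod 2, a ≠ 0 → a = 1 := by decide
  obtain ⟨h10, hv1⟩ := w.unit_of he₁
  obtain ⟨h20, hv2⟩ := w.unit_of he₂
  have hadd := fun {a b : K} => w.chi_add χ hχ n hvan (a := a) (b := b)
  have hε0 : e₁ - e₂ ≠ 0 := sub_ne_zero.2 hee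
  have hε : 2 * (n : ℤ) + 1 ≤ w.v (e₁ - e₂) := by
    rcases hcong with h | h
    · exact absurd ((div_eq_one_iff_eq h20).1 h) hee
    · rw [show e₁ / e₂ - 1 = (e₁ - e₂) * e₂⁻¹ by field_simp,
        w.v_mul hε0 (inv_ne_zero h20), w.v_inv' h20] at h
      omega
  have hχe₂ : χ e₂ = 0 := by
    have := hadd h20 hε0 (by simpa using h10) (by omega)
    rw [← this, add_sub_cancel, hχe₁]
  have hχ1 : χ 1 = 0 := hvan 1 (Or.inl rfl)
  apply le_antisymm
  · rw [AddSubgroup.closure_le]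
    rintro p (hp | ⟨x, hx0, hx1, hx2, hx, rfl⟩)
    · simp only [Set.mem_insert_iff, Set.mem_singleton_iff] at hp
      rcases hp with rfl | rfl | rfl | rfl <;>
        simp [AddSubgroup.mem_prod, hχ h10 h20, hχe₁, hχe₂]
    · have d1 : x - e₁ ≠ 0 := sub_ne_zero.2 hx1
      have d2 : x - e₂ ≠ 0 := sub_ne_zero.2 hx2
      have key : χ x = 0 := by
        rcases le_or_gt (w.v (x - e₂)) n with h | h
        · have h3 := hadd d2 (neg_ne_zero.2 hε0)
            (by rw [show x - e₂ + -(e₁ - e₂) = x - e₁ by ring]; exact d1)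
            (by rw [w.v_neg' hε0]; omega)
          rw [show x - e₂ + -(e₁ - e₂) = x - e₁ by ring] at h3
          rw [hχ (mul_ne_zero hx0 d1) d2, hχ hx0 d1, h3, add_assoc, z2, add_zero] at hx
          exact hx
        · have h3 := hadd h20 d2 (by simpa using hx0) (by omega)
          rw [add_sub_cancel] at h3
          rw [h3, hχe₂]
      simp [AddSubgroup.mem_prod, key]
  · suffices hs : ((0 : ZMod 2), (1 : ZMod 2)) ∈ AddSubgroup.closure
        (({((0 : ZMod 2), (0 : ZMod 2)), (χ (e₁ * e₂), χ (-e₁)),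
            (χ e₁, χ (e₁ * (e₁ - e₂))), (χ e₂, χ (e₂ - e₁))} : Set (ZMod 2 × ZMod 2)) ∪
          {p : ZMod 2 × ZMod 2 | ∃ x : K, x ≠ 0 ∧ x ≠ e₁ ∧ x ≠ e₂ ∧
            χ (x * (x - e₁) * (x - e₂)) = 0 ∧ p = (χ x, χ (x - e₁))}) by
      rintro ⟨a, b⟩ hab
      have ha : a = 0 := by simpa [AddSubgroup.mem_prod] using hab
      subst ha
      by_cases hb : b = 0
      · subst hb; exact AddSubgroup.zero_mem _
      · rw [z1 b hb]; exact hs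
    apply AddSubgroup.subset_closure
    by_cases hm : χ (-1) = 0
    swap
    · left; right; left
      rw [hχ h10 h20, hχe₁, hχe₂, show -e₁ = -1 * e₁ by ring, hχ (by simp) h10, hχe₁,
        z1 _ hm]
      rfl
    have key : ∃ t : K, t ≠ 0 ∧ 1 + t ≠ 0 ∧ w.v t = 0 ∧ χ t = 1 ∧ χ (1 + t) = 0 := by
      obtain ⟨u, hu, hχu⟩ := hnonvan
      have hu1 : w.IsUnit₁ 1 u := by
        rcases hu with h | h
        · exact Or.inl h
        · right; omega
      obtain ⟨hu0, hvu⟩ := w.unit_of hu1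
      have hu' : 1 + u ≠ 0 := by
        intro h
        rw [show u = -1 by linear_combination h] at hχu
        exact hχu hm
      by_cases hc : χ (1 + u) = 0
      · exact ⟨u, hu0, hu', hvu, z1 _ hχu, hc⟩
      · have hi : χ u⁻¹ = 1 := by
          have := hχ hu0 (inv_ne_zero hu0)
          rw [mul_inv_cancel₀ hu0, hχ1, z1 _ hχu] at this
          revert this
          generalize χ u⁻¹ = a
          revert a
          decide
        have he : 1 + u⁻¹ = (1 + u) * u⁻¹ := by field_simp; ring
        refine ⟨u⁻¹, inv_ne_zero hu0, ?_, ?_, hi, ?_⟩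
        · rw [he]; exact mul_ne_zero hu' (inv_ne_zero hu0)
        · rw [w.v_inv' hu0, hvu]; rfl
        · rw [he, hχ hu' (inv_ne_zero hu0), hi, z1 _ hc]; rfl
    obtain ⟨t, ht0, ht1, hvt, hχt, hχt1⟩ := key
    right
    have het : e₁ * t ≠ 0 := mul_ne_zero h10 ht0
    have hvet : w.v (e₁ * t) = 0 := by rw [w.v_mul h10 ht0, hv1, hvt]; rfl
    have hne : e₁ * t + (e₁ - e₂) ≠ 0 := by
      intro h
      have h' : e₁ - e₂ = -(e₁ * t) := by linear_combination h
      rw [h', w.v_neg' het] at hε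
      omega
    have h3 := hadd het hε0 hne (by omega)
    have s1 : e₁ * (1 + t) - e₁ = e₁ * t := by ring
    have s2 : e₁ * (1 + t) - e₂ = e₁ * t + (e₁ - e₂) := by ring
    have hx0 : e₁ * (1 + t) ≠ 0 := mul_ne_zero h10 ht1
    have hx : χ (e₁ * (1 + t)) = 0 := by rw [hχ h10 ht1, hχe₁, hχt1]; rfl
    refine ⟨e₁ * (1 + t), hx0, ?_, ?_, ?_, ?_⟩
    · rw [← sub_ne_zero, s1]; exact het
    · rw [← sub_ne_zero, s2]; exact hne
    · rw [s1, s2, hχ (mul_ne_zero hx0 het) hne, hχ hx0 het, h3, hx, add_assoc, z2, add_zero]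
    · rw [s1, hx, hχ h10 ht0, hχe₁, hχt, zero_add]
end

section
/- Let χ : K^× → ℤ/2ℤ be a group homomorphism and n ≥ 1 an integer such that χ vanishes on U_{n+1}. Suppose e₁/e₂ ∈ U_{2n+1} (i.e. v(e₁−e₂) ≥ 2n+1) and χ(e₁) = χ(e₂) = 0. If x ∈ K^× satisfies x ≠ e₁, x ≠ e₂, −n ≤ v(x) ≤ n, and χ(x) = 1, then χ(x−e₁) = χ(x−e₂); in particular χ(x(x−e₁)(x−e₂)) = 1. -/
/-- The key computation in the proof of case (i) of Proposition 4:
`χ : K^× → ℤ/2ℤ` a homomorphism vanishing on `U_{n+1}` (`n ≥ 1`),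
`e₁, e₂` distinct `1`-units with `e₁/e₂ ∈ U_{2n+1}` (i.e. `v(e₁−e₂) ≥ 2n+1`)
and `χ(e₁) = χ(e₂) = 0`.  If `x ∈ K^×`, `x ≠ e₁`, `x ≠ e₂`,
`−n ≤ v(x) ≤ n` and `χ(x) = 1`, then `χ(x−e₁) = χ(x−e₂)`; in particular
`χ(x(x−e₁)(x−e₂)) = 1`. -/
theorem chatelet_case_i_key
    (K : Type*) [Field K] [Algebra ℚ_[2] K] [FiniteDimensional ℚ_[2] K]
    (w : DValuation K)
    (hext : ∀ x : ℚ_[2], x ≠ 0 →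
      w.v (algebraMap ℚ_[2] K x) = w.v (algebraMap ℚ_[2] K 2) * x.valuation)
    (χ : K → ZMod 2)
    (hχ : ∀ ⦃x y : K⦄, x ≠ 0 → y ≠ 0 → χ (x * y) = χ x + χ y)
    (n : ℕ) (hn : 1 ≤ n)
    (hvan : ∀ u : K, w.IsUnit₁ ((n : ℤ) + 1) u → χ u = 0)
    (e₁ e₂ : K) (he₁ : w.IsUnit₁ 1 e₁) (he₂ : w.IsUnit₁ 1 e₂) (hee : e₁ ≠ e₂)
    (hcong : w.IsUnit₁ (2 * (n : ℤ) + 1) (e₁ / e₂))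
    (hχe₁ : χ e₁ = 0) (hχe₂ : χ e₂ = 0)
    (x : K) (hx0 : x ≠ 0) (hxe₁ : x ≠ e₁) (hxe₂ : x ≠ e₂)
    (hv₁ : -(n : ℤ) ≤ w.v x) (hv₂ : w.v x ≤ (n : ℤ)) (hχx : χ x = 1) :
    χ (x - e₁) = χ (x - e₂) ∧ χ (x * (x - e₁) * (x - e₂)) = 1 := by
  have h1 : w.v 1 = 0 := by
    have := w.v_mul (one_ne_zero (α := K)) one_ne_zero
    rw [mul_one] at this
    omega
  have hm1 : w.v (-1) = 0 := by
    have hne : (-1 : K) ≠ 0 := neg_ne_zero.mpr one_ne_zero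
    have := w.v_mul hne hne
    rw [neg_mul_neg, mul_one] at this
    omega
  have hneg : ∀ y : K, y ≠ 0 → w.v (-y) = w.v y := by
    intro y hy
    have := w.v_mul (neg_ne_zero.mpr (one_ne_zero (α := K))) hy
    rw [neg_one_mul] at this
    omega
  have he0 : e₂ ≠ 0 := by
    rintro rfl
    rcases he₂ with h | h
    · exact zero_ne_one h
    · rw [zero_sub, hm1] at h
      omega
  have hve : w.v e₂ = 0 := by
    rcases he₂ with h | h
    · rw [h, h1]
    · by_cases h' : e₂ = 1
      · rw [h', h1]
      have hs : e₂ - 1 ≠ 0 := sub_ne_zero.mpr h'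
      have a := w.min_le_v_add (one_ne_zero (α := K)) hs (by simpa using he0)
      have b := w.min_le_v_add he0 (neg_ne_zero.mpr hs) (by simp)
      rw [hneg _ hs] at b
      have e1 : (1 : K) + (e₂ - 1) = e₂ := by ring
      have e2 : e₂ + -(e₂ - 1) = 1 := by ring
      rw [e1, h1] at a
      rw [e2, h1] at b
      omega
  have hd1 : x - e₁ ≠ 0 := sub_ne_zero.mpr hxe₁
  have hd2 : x - e₂ ≠ 0 := sub_ne_zero.mpr hxe₂
  have hq : e₁ / e₂ ≠ 1 := fun h => hee ((div_eq_one_iff_eq he0).mp h)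
  have hvd : 2 * (n : ℤ) + 1 ≤ w.v (e₂ - e₁) := by
    rcases hcong with h | h
    · exact absurd h hq
    · have a := w.v_mul he0 (sub_ne_zero.mpr hq)
      have e : e₂ * (e₁ / e₂ - 1) = -(e₂ - e₁) := by
        field_simp
        ring
      rw [e, hneg _ (sub_ne_zero.mpr hee.symm)] at a
      omega
  -- `x` is not too close to `e₂`
  have hle : w.v (x - e₂) ≤ n := by
    by_contra hlt
    have hr : x / e₂ - 1 ≠ 0 := by
      rw [div_sub_one he0]
      exact div_ne_zero hd2 he0
    have a := w.v_mul he0 hr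
    have e : e₂ * (x / e₂ - 1) = x - e₂ := by field_simp
    rw [e] at a
    have c : χ (x / e₂) = 0 := hvan _ (Or.inr (by omega))
    have d := hχ he0 (div_ne_zero hx0 he0)
    rw [mul_div_cancel₀ _ he0, c, hχe₂, hχx] at d
    exact absurd d (by decide)
  have key : χ (x - e₁) = χ (x - e₂) := by
    have hr : (e₂ - e₁) / (x - e₂) ≠ 0 := div_ne_zero (sub_ne_zero.mpr hee.symm) hd2
    have a := w.v_mul hd2 hr
    rw [mul_div_cancel₀ _ hd2] at a
    have e : (x - e₁) / (x - e₂) - 1 = (e₂ - e₁) / (x - e₂) := by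
      field_simp
      ring
    have c : χ ((x - e₁) / (x - e₂)) = 0 := hvan _ (Or.inr (by rw [e]; omega))
    have d := hχ hd2 (div_ne_zero hd1 hd2)
    rw [mul_div_cancel₀ _ hd2, c, add_zero] at d
    exact d
  refine ⟨key, ?_⟩
  rw [hχ (mul_ne_zero hx0 hd1) hd2, hχ hx0 hd1, key, hχx, add_assoc, CharTwo.add_self_eq_zero,
    add_zero]
end

section
/- Let k be a finite field with q elements, let h ⊆ k be a subgroup of the additive group of k with exactly q/2 elements (an index-2 subgroup), and let s ∈ k^× be a nonzero element. Then there exists t ∈ k with t ∉ h and s·t⁻¹ ∉ h. -/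
/-- The counting argument ("saved by the skin of our teeth"):  if `k` is a
finite field with `q` elements, `h ⊆ k` is a subgroup of the additive group
of `k` with exactly `q/2` elements (an index-2 subgroup), and `s ∈ k^×`,
then there exists `t ∈ k` with `t ∉ h` and `s·t⁻¹ ∉ h`. -/
theorem exists_teichmuller_pair_outside_subgroup
    (k : Type*) [Field k] [Fintype k] (q : ℕ) (hq : Nat.card k = q)
    (h : AddSubgroup k) (hcard : Nat.card h = q / 2)
    (s : k) (hs : s ≠ 0) :
    ∃ t : k, t ∉ h ∧ s * t⁻¹ ∉ h := by
  classical
  by_contra! hc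
  let H : Finset k := Finset.univ.filter (fun x => x ∈ h)
  have hH : H.card = q / 2 := by
    rw [← hcard, Nat.card_eq_fintype_card]
    exact (Fintype.card_subtype (fun x => x ∈ h)).symm
  have hle : Hᶜ.card ≤ (H.erase 0).card := by
    apply Finset.card_le_card_of_injOn (fun t => s * t⁻¹)
    · intro t ht
      have ht' : t ∉ h := by simpa [H] using ht
      have ht0 : t ≠ 0 := fun h0 => ht' (h0 ▸ h.zero_mem)
      simpa [H, hs, ht0] using hc t ht'
    · intro a _ b _ hab
      exact inv_injective (mul_left_cancel₀ hs hab)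
  have h0 : (0 : k) ∈ H := by simp [H]
  have hpos : 0 < H.card := Finset.card_pos.mpr ⟨0, h0⟩
  rw [Finset.card_compl, Finset.card_erase_of_mem h0, ← Nat.card_eq_fintype_card, hq] at hle
  omega
end
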